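/- Let d ≥ 2 and let Q_i (i ∈ ℕ) be the real polynomials defined by Q_0(t) = 1, Q_1(t) = t, Q_2(t) = (d·t² − 1)/(d − 1), and (i + d − 2)·Q_{i+1}(t) = (2i + d − 2)·t·Q_i(t) − i·Q_{i−1}(t) for i ≥ 2. Suppose f = f_0·Q_0 + f_1·Q_1 + … + f_k·Q_k for some k ≥ 1 with f_0 > 0 and f_1, …, f_k ≥ 0, and suppose there is s ∈ (−1, 1) such that f(t) ≤ 0 for all t ∈ [−1, s]. Then every finite set X of unit vectors in ℝ^d with ⟨x, y⟩ ≤ s for all distinct x, y ∈ X satisfies |X| ≤ f(1)/f_0. -/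

import Mathlib

open scoped RealInnerProductSpace

/-!
For the Fischer pairing `⟨p, q⟩ = (p(∂) q)(0)`, multiplication by `X i` is adjoint to `∂/∂X i`, so
multiplication by `|y| ^ 2` is adjoint to the Laplacian and harmonic polynomials are orthogonal to
the multiples of `|y| ^ 2`. The homogenization of `Q_n (⟨x, y⟩)` in `y` is harmonic and, modulo
`|y| ^ 2`, a positive multiple of `⟨x, y⟩ ^ n`; pairing with it is therefore evaluation at `x`, up
to a positive factor, on the harmonic polynomials of degree `n`. So on unit vectors the kernel
`Q_n (⟨x, y⟩)` is, up to that factor, a Gram matrix, hence positive semidefinite (Schoenberg).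

The sum of `f (⟨x, y⟩)` over `X × X` is then at least `f_0 |X| ^ 2`, and at most `|X| f(1)` because
the off-diagonal terms are nonpositive.
-/

section Fischer

open MvPolynomial Finsupp
open scoped Nat

variable {σ R : Type*}

theorem prod_factorial_add_single (a : σ →₀ ℕ) (i : σ) :
    ((a + single i 1).prod fun _ n ↦ n !) = (a i + 1) * a.prod fun _ n ↦ n ! := by
  classical
  have herase : (a + single i 1).erase i = a.erase i := by ext j; by_cases h : j = i <;> simp [h]
  rw [← mul_prod_erase' (a + single i 1) i _ fun _ ↦ Nat.factorial_zero,
    ← mul_prod_erase' a i _ fun _ ↦ Nat.factorial_zero, herase, ← mul_assoc]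
  simp [Nat.factorial_succ]

section CommSemiring

variable [CommSemiring R]

/-- The Fischer (apolar) pairing `⟨p, q⟩ = (p(∂) q)(0)`, for which the monomials are orthogonal
and `⟨Xᵃ, Xᵃ⟩ = ∏ i, (a i)!`. -/
noncomputable def fischerForm : MvPolynomial σ R →ₗ[R] MvPolynomial σ R →ₗ[R] R :=
  (basisMonomials σ R).constr R fun a ↦ (a.prod fun _ n ↦ n !) • lcoeff R a

theorem fischerForm_monomial (a : σ →₀ ℕ) (r : R) (q : MvPolynomial σ R) :
    fischerForm (monomial a r) q = r * ((a.prod fun _ n ↦ n ! : ℕ) * coeff a q) := by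
  have hr : monomial a r = r • basisMonomials σ R a := by simp [smul_monomial]
  rw [hr, map_smul, fischerForm, Module.Basis.constr_basis]
  simp

theorem fischerForm_one (q : MvPolynomial σ R) : fischerForm 1 q = constantCoeff q := by
  rw [one_def, fischerForm_monomial]
  simp [constantCoeff_eq]

theorem fischerForm_X_mul (i : σ) (p q : MvPolynomial σ R) :
    fischerForm (X i * p) q = fischerForm p (pderiv i q) := by
  induction p using MvPolynomial.induction_on' with
  | monomial a r =>
    rw [X, monomial_mul, one_mul, add_comm, fischerForm_monomial, fischerForm_monomial,
      coeff_pderiv, prod_factorial_add_single]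
    push_cast
    ring
  | add p₁ p₂ h₁ h₂ => simp only [mul_add, map_add, LinearMap.add_apply, h₁, h₂]

end CommSemiring

theorem fischerForm_self_nonneg [CommRing R] [LinearOrder R] [IsStrictOrderedRing R]
    (p : MvPolynomial σ R) : 0 ≤ fischerForm p p := by
  have hsum : fischerForm p p =
      ∑ a ∈ p.support, coeff a p * ((a.prod fun _ n ↦ n ! : ℕ) * coeff a p) := by
    conv_lhs => enter [1]; rw [p.as_sum]
    simp only [map_sum, LinearMap.sum_apply, fischerForm_monomial]
  rw [hsum]
  refine Finset.sum_nonneg fun a _ ↦ ?_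
  rw [mul_left_comm]
  exact mul_nonneg (Nat.cast_nonneg _) (mul_self_nonneg _)

end Fischer

section Laplacian

open MvPolynomial
open scoped Nat

variable {σ R : Type*} [Fintype σ] [CommSemiring R]

/-- The Laplacian `∑ i, ∂²/∂(X i)²` on polynomials. -/
noncomputable def polyLaplacian : MvPolynomial σ R →ₗ[R] MvPolynomial σ R :=
  ∑ i, (pderiv i).toLinearMap ∘ₗ (pderiv i).toLinearMap

/-- The linear form `y ↦ ⟨x, y⟩` as a polynomial in the coordinates of `y`. -/
noncomputable def linearForm (x : σ → R) : MvPolynomial σ R :=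
  ∑ i, x i • X i

/-- The derivative `∑ i, x i • ∂/∂(X i)` in the direction `x`. -/
noncomputable def dirDeriv (x : σ → R) : Derivation R (MvPolynomial σ R) (MvPolynomial σ R) :=
  ∑ i, x i • pderiv i

theorem polyLaplacian_apply (p : MvPolynomial σ R) :
    polyLaplacian p = ∑ i, pderiv i (pderiv i p) := by
  simp [polyLaplacian]

theorem dirDeriv_apply (x : σ → R) (p : MvPolynomial σ R) :
    dirDeriv x p = ∑ i, x i • pderiv i p := by
  rw [dirDeriv, ← Derivation.coeFnAddMonoidHom_apply, map_sum, Finset.sum_apply]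
  rfl

theorem isHomogeneous_linearForm (x : σ → R) : (linearForm x).IsHomogeneous 1 :=
  (homogeneousSubmodule σ R 1).sum_mem fun i _ ↦
    Submodule.smul_mem _ (x i) (isHomogeneous_X R i)

theorem isHomogeneous_psum (n : ℕ) : (psum σ R n).IsHomogeneous n :=
  IsHomogeneous.sum _ _ _ fun i _ ↦ isHomogeneous_X_pow i n

theorem eval_linearForm (x y : σ → R) : eval y (linearForm x) = x ⬝ᵥ y := by
  simp [linearForm, dotProduct]

theorem eval_psum_two (y : σ → R) : eval y (psum σ R 2) = y ⬝ᵥ y := by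
  simp [psum, dotProduct, sq]

theorem pderiv_linearForm (x : σ → R) (i : σ) : pderiv i (linearForm x) = C (x i) := by
  classical
  simp [linearForm, pderiv_X, Pi.single_apply, smul_eq_C_mul]

theorem pderiv_psum_two (i : σ) : pderiv i (psum σ R 2) = 2 * X i := by
  classical
  simp [psum, pderiv_X, Pi.single_apply]

theorem dirDeriv_linearForm (x y : σ → R) : dirDeriv x (linearForm y) = C (x ⬝ᵥ y) := by
  simp [dirDeriv_apply, pderiv_linearForm, dotProduct, smul_eq_C_mul]

theorem dirDeriv_psum_two (x : σ → R) : dirDeriv x (psum σ R 2) = 2 * linearForm x := by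
  simp [dirDeriv_apply, pderiv_psum_two, linearForm, Finset.mul_sum]

theorem polyLaplacian_mul (p q : MvPolynomial σ R) :
    polyLaplacian (p * q) =
      polyLaplacian p * q + 2 * ∑ i, pderiv i p * pderiv i q + p * polyLaplacian q := by
  simp only [polyLaplacian_apply, pderiv_mul, map_add, Finset.mul_sum, Finset.sum_mul,
    ← Finset.sum_add_distrib]
  exact Finset.sum_congr rfl fun i _ ↦ by ring

theorem polyLaplacian_linearForm (x : σ → R) : polyLaplacian (linearForm x) = 0 := by
  simp [polyLaplacian_apply, pderiv_linearForm]

theorem polyLaplacian_psum_two :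
    polyLaplacian (psum σ R 2) = 2 * (Fintype.card σ : MvPolynomial σ R) := by
  simp [polyLaplacian_apply, pderiv_psum_two, ← map_ofNat C 2, mul_comm]

theorem polyLaplacian_linearForm_mul (x : σ → R) (p : MvPolynomial σ R) :
    polyLaplacian (linearForm x * p) = 2 * dirDeriv x p + linearForm x * polyLaplacian p := by
  simp only [polyLaplacian_mul, polyLaplacian_linearForm, pderiv_linearForm, dirDeriv_apply,
    smul_eq_C_mul, zero_mul, zero_add]

theorem polyLaplacian_psum_two_mul {p : MvPolynomial σ R} {n : ℕ} (hp : p.IsHomogeneous n) :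
    polyLaplacian (psum σ R 2 * p) =
      (2 * Fintype.card σ + 4 * n : MvPolynomial σ R) * p + psum σ R 2 * polyLaplacian p := by
  have heuler : ∑ i, pderiv i (psum σ R 2) * pderiv i p = 2 * (n * p) := by
    simp only [pderiv_psum_two, mul_assoc, ← Finset.mul_sum, hp.sum_X_mul_pderiv, nsmul_eq_mul]
  rw [polyLaplacian_mul, polyLaplacian_psum_two, heuler]
  ring

theorem fischerForm_psum_two_mul (p q : MvPolynomial σ R) :
    fischerForm (psum σ R 2 * p) q = fischerForm p (polyLaplacian q) := by
  simp only [psum, sq, Finset.sum_mul, mul_assoc, map_sum, LinearMap.sum_apply,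
    fischerForm_X_mul, polyLaplacian_apply]

theorem fischerForm_linearForm_mul (x : σ → R) (p q : MvPolynomial σ R) :
    fischerForm (linearForm x * p) q = fischerForm p (dirDeriv x q) := by
  simp only [linearForm, Finset.sum_mul, map_sum, LinearMap.sum_apply,
    smul_mul_assoc, map_smul, LinearMap.smul_apply, fischerForm_X_mul, dirDeriv_apply]

theorem eval_dirDeriv_self (x : σ → R) {p : MvPolynomial σ R} {n : ℕ} (hp : p.IsHomogeneous n) :
    eval x (dirDeriv x p) = n * eval x p := by
  simpa [dirDeriv_apply] using congrArg (eval x) hp.sum_X_mul_pderiv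

theorem isHomogeneous_dirDeriv (x : σ → R) {p : MvPolynomial σ R} {n : ℕ}
    (hp : p.IsHomogeneous n) : (dirDeriv x p).IsHomogeneous (n - 1) := by
  rw [dirDeriv_apply]
  exact (homogeneousSubmodule σ R (n - 1)).sum_mem fun i _ ↦ Submodule.smul_mem _ (x i) hp.pderiv

theorem fischerForm_linearForm_pow (x : σ → R) (n : ℕ) {q : MvPolynomial σ R}
    (hq : q.IsHomogeneous n) : fischerForm (linearForm x ^ n) q = n ! * eval x q := by
  induction n generalizing q with
  | zero =>
    have hconst : q = C (coeff 0 q) :=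
      totalDegree_eq_zero_iff_eq_C.mp (Nat.le_zero.mp hq.totalDegree_le)
    rw [pow_zero, fischerForm_one, hconst]
    simp
  | succ n ih =>
    rw [pow_succ', fischerForm_linearForm_mul, ih (isHomogeneous_dirDeriv x hq),
      eval_dirDeriv_self x hq, Nat.factorial_succ]
    push_cast
    ring

end Laplacian

section Gegenbauer

variable {K : Type*} [Field K]

open Polynomial in
/-- The Gegenbauer polynomials for dimension `d`, normalized to take the value `1` at `1`. The
coefficients are junk if `n + d - 1 = 0` for some natural number `n`. -/
noncomputable def gegenbauer (d : K) : ℕ → K[X]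
  | 0 => 1
  | 1 => X
  | n + 2 => C ((2 * n + d) / (n + d - 1)) * (X * gegenbauer d (n + 1)) -
      C ((n + 1) / (n + d - 1)) * gegenbauer d n

theorem natCast_add_natCast_sub_one_ne_zero [CharZero K] {d : ℕ} (hd : 1 < d) (n : ℕ) :
    (n + d - 1 : K) ≠ 0 := by
  have hpos : n + d - 1 ≠ 0 := by omega
  simpa [Nat.cast_sub (show 1 ≤ n + d by omega)] using Nat.cast_ne_zero (R := K).mpr hpos

theorem mul_eval_gegenbauer_add_two {d : K} (hd : ∀ n : ℕ, n + d - 1 ≠ 0) (n : ℕ) (t : K) :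
    (n + d - 1) * (gegenbauer d (n + 2)).eval t =
      (2 * n + d) * t * (gegenbauer d (n + 1)).eval t - (n + 1) * (gegenbauer d n).eval t := by
  have hn := hd n
  simp only [gegenbauer, Polynomial.eval_sub, Polynomial.eval_mul, Polynomial.eval_C,
    Polynomial.eval_X]
  field_simp

theorem eval_one_gegenbauer {d : K} (hd : ∀ n : ℕ, n + d - 1 ≠ 0) (n : ℕ) :
    (gegenbauer d n).eval 1 = 1 := by
  induction n using Nat.twoStepInduction with
  | zero => simp [gegenbauer]
  | one => simp [gegenbauer]
  | more n h₀ h₁ =>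
    refine mul_left_cancel₀ (hd n) ?_
    rw [mul_eval_gegenbauer_add_two hd, h₀, h₁]
    ring

theorem eq_eval_gegenbauer {d : K} (hd : ∀ n : ℕ, n + d - 1 ≠ 0) {Q : ℕ → K → K}
    (hQ0 : ∀ t, Q 0 t = 1) (hQ1 : ∀ t, Q 1 t = t)
    (hQ2 : ∀ t, Q 2 t = (d * t ^ 2 - 1) / (d - 1))
    (hQrec : ∀ i : ℕ, 2 ≤ i → ∀ t,
      (i + d - 2) * Q (i + 1) t = (2 * i + d - 2) * t * Q i t - i * Q (i - 1) t)
    (n : ℕ) (t : K) : Q n t = (gegenbauer d n).eval t := by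
  induction n using Nat.twoStepInduction with
  | zero => simp [gegenbauer, hQ0]
  | one => simp [gegenbauer, hQ1]
  | more n h₀ h₁ =>
    refine mul_left_cancel₀ (hd n) ?_
    rw [mul_eval_gegenbauer_add_two hd, ← h₀, ← h₁]
    obtain rfl | hn := n.eq_zero_or_pos
    · have hd₀ : d - 1 ≠ 0 := by simpa using hd 0
      simp only [hQ0, hQ1, hQ2, Nat.cast_zero, zero_add]
      field_simp
      ring
    · have hrec := hQrec (n + 1) (by omega) t
      rw [Nat.add_sub_cancel] at hrec
      push_cast at hrec
      linear_combination hrec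

end Gegenbauer

section ZonalHarmonic

open MvPolynomial
open scoped Nat

variable {σ K : Type*} [Fintype σ] [Field K]

/-- The zonal harmonic of degree `n` with pole `x`, i.e. the homogeneous polynomial
`y ↦ (|x| |y|) ^ n * Q_n (⟨x, y⟩ / (|x| |y|))` with `Q_n` the Gegenbauer polynomial for dimension
`card σ`, obtained by homogenizing the recursion for `gegenbauer`. The power sum `psum σ K 2` is
`|y| ^ 2`. -/
noncomputable def zonalHarmonic (x : σ → K) : ℕ → MvPolynomial σ K
  | 0 => 1
  | 1 => linearForm x
  | n + 2 =>
      C ((2 * n + Fintype.card σ) / (n + Fintype.card σ - 1) : K) *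
        (linearForm x * zonalHarmonic x (n + 1)) -
      C ((n + 1) / (n + Fintype.card σ - 1) * (x ⬝ᵥ x) : K) * (psum σ K 2 * zonalHarmonic x n)

theorem eval_zonalHarmonic {x y : σ → K} (hx : x ⬝ᵥ x = 1) (hy : y ⬝ᵥ y = 1) (n : ℕ) :
    eval y (zonalHarmonic x n) = (gegenbauer (Fintype.card σ : K) n).eval (x ⬝ᵥ y) := by
  induction n using Nat.twoStepInduction with
  | zero => simp [zonalHarmonic, gegenbauer]
  | one => simp [zonalHarmonic, gegenbauer, eval_linearForm]
  | more n h₀ h₁ =>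
    simp [zonalHarmonic, gegenbauer, eval_linearForm, eval_psum_two, h₀, h₁, hx, hy]

theorem isHomogeneous_zonalHarmonic (x : σ → K) (n : ℕ) :
    (zonalHarmonic x n).IsHomogeneous n := by
  induction n using Nat.twoStepInduction with
  | zero => exact isHomogeneous_one σ K
  | one => exact isHomogeneous_linearForm x
  | more n h₀ h₁ =>
    rw [zonalHarmonic]
    have hlinear : (linearForm x * zonalHarmonic x (n + 1)).IsHomogeneous (n + 2) :=
      (by omega : 1 + (n + 1) = n + 2) ▸ (isHomogeneous_linearForm x).mul h₁
    have hquadratic : (psum σ K 2 * zonalHarmonic x n).IsHomogeneous (n + 2) :=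
      add_comm 2 n ▸ (isHomogeneous_psum 2).mul h₀
    exact (hlinear.C_mul _).sub (hquadratic.C_mul _)

section CharZero

variable [CharZero K] [Nontrivial σ]

theorem C_mul_zonalHarmonic_add_two (x : σ → K) (n : ℕ) :
    C (n + Fintype.card σ - 1 : K) * zonalHarmonic x (n + 2) =
      C (2 * n + Fintype.card σ : K) * (linearForm x * zonalHarmonic x (n + 1)) -
        C ((n + 1) * (x ⬝ᵥ x) : K) * (psum σ K 2 * zonalHarmonic x n) := by
  have hn := natCast_add_natCast_sub_one_ne_zero (K := K) (Fintype.one_lt_card (α := σ)) n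
  rw [zonalHarmonic, mul_sub, ← mul_assoc, ← C_mul, mul_div_cancel₀ _ hn, ← mul_assoc (C _) (C _),
    ← C_mul, ← mul_assoc (n + Fintype.card σ - 1 : K), mul_div_cancel₀ _ hn]

theorem C_mul_dirDeriv_zonalHarmonic_add_two (x : σ → K) (n : ℕ) :
    C (n + Fintype.card σ - 1 : K) * dirDeriv x (zonalHarmonic x (n + 2)) =
      C (2 * n + Fintype.card σ : K) *
        (linearForm x * dirDeriv x (zonalHarmonic x (n + 1)) +
          C (x ⬝ᵥ x) * zonalHarmonic x (n + 1)) -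
      C ((n + 1) * (x ⬝ᵥ x) : K) *
        (psum σ K 2 * dirDeriv x (zonalHarmonic x n) + 2 * linearForm x * zonalHarmonic x n) := by
  have h := congrArg (dirDeriv x) (C_mul_zonalHarmonic_add_two x n)
  simp only [(dirDeriv x).map_sub, Derivation.leibniz, derivation_C, smul_eq_mul,
    dirDeriv_linearForm, dirDeriv_psum_two] at h
  linear_combination h

theorem dirDeriv_zonalHarmonic (x : σ → K) (n : ℕ) :
    dirDeriv x (zonalHarmonic x (n + 1)) = C ((n + 1) * (x ⬝ᵥ x) : K) * zonalHarmonic x n := by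
  have hcard (m : ℕ) : C (m + Fintype.card σ - 1 : K) ≠ (0 : MvPolynomial σ K) :=
    C_ne_zero.mpr (natCast_add_natCast_sub_one_ne_zero Fintype.one_lt_card m)
  induction n using Nat.twoStepInduction with
  | zero => simp [zonalHarmonic, dirDeriv_linearForm]
  | one =>
    refine mul_left_cancel₀ (hcard 0) ?_
    rw [C_mul_dirDeriv_zonalHarmonic_add_two]
    simp only [zonalHarmonic, Derivation.map_one_eq_zero, dirDeriv_linearForm, map_add, map_sub,
      map_mul, map_natCast, map_ofNat, map_one]
    push_cast
    ring
  | more n h₀ h₁ =>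
    have hrec := C_mul_zonalHarmonic_add_two x n
    refine mul_left_cancel₀ (hcard (n + 1)) ?_
    rw [C_mul_dirDeriv_zonalHarmonic_add_two, h₀, h₁]
    simp only [map_add, map_sub, map_mul, map_natCast, map_ofNat, map_one] at hrec ⊢
    push_cast
    linear_combination (-((n : MvPolynomial σ K) + 2) * C (x ⬝ᵥ x)) * hrec

theorem polyLaplacian_zonalHarmonic (x : σ → K) (n : ℕ) :
    polyLaplacian (zonalHarmonic x n) = 0 := by
  induction n using Nat.twoStepInduction with
  | zero => simp [zonalHarmonic, polyLaplacian_apply]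
  | one => exact polyLaplacian_linearForm x
  | more n h₀ h₁ =>
    simp only [zonalHarmonic, map_sub, ← smul_eq_C_mul, map_smul, polyLaplacian_linearForm_mul,
      polyLaplacian_psum_two_mul (isHomogeneous_zonalHarmonic x n), dirDeriv_zonalHarmonic, h₀, h₁]
    simp only [smul_eq_C_mul, div_eq_mul_inv, map_mul, map_add, map_natCast, map_ofNat, map_one]
    ring

end CharZero

theorem exists_pos_psum_two_dvd_zonalHarmonic_sub [LinearOrder K] [IsStrictOrderedRing K]
    [Nontrivial σ] (n : ℕ) :
    ∃ c : K, 0 < c ∧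
      ∀ x : σ → K, psum σ K 2 ∣ zonalHarmonic x n - C c * linearForm x ^ n := by
  induction n using Nat.twoStepInduction with
  | zero => exact ⟨1, one_pos, fun x ↦ by simp [zonalHarmonic]⟩
  | one => exact ⟨1, one_pos, fun x ↦ by simp [zonalHarmonic]⟩
  | more n _ h₁ =>
    obtain ⟨c, hc, hdvd⟩ := h₁
    have hcard : (1 : K) < Fintype.card σ := by exact_mod_cast Fintype.one_lt_card
    have hlead : 0 < (2 * n + Fintype.card σ) / (n + Fintype.card σ - 1 : K) :=
      div_pos (by positivity) (sub_pos.mpr (lt_add_of_nonneg_of_lt n.cast_nonneg hcard))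
    refine ⟨(2 * n + Fintype.card σ) / (n + Fintype.card σ - 1) * c, mul_pos hlead hc, fun x ↦ ?_⟩
    obtain ⟨p, hp⟩ := hdvd x
    rw [sub_eq_iff_eq_add] at hp
    refine ⟨C ((2 * n + Fintype.card σ) / (n + Fintype.card σ - 1) : K) * (linearForm x * p) -
      C ((n + 1) / (n + Fintype.card σ - 1) * (x ⬝ᵥ x) : K) * zonalHarmonic x n, ?_⟩
    rw [zonalHarmonic, hp, C_mul (a := _ / _) (a' := c)]
    ring

/-- Since `q` is harmonic, it is orthogonal to the multiples of `|y| ^ 2`, and only the multiple of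
`⟨x, y⟩ ^ n` in the zonal harmonic contributes. -/
theorem exists_pos_fischerForm_zonalHarmonic [LinearOrder K] [IsStrictOrderedRing K]
    [Nontrivial σ] (n : ℕ) :
    ∃ c : K, 0 < c ∧ ∀ (x : σ → K) (q : MvPolynomial σ K), q.IsHomogeneous n →
      polyLaplacian q = 0 → fischerForm (zonalHarmonic x n) q = c * eval x q := by
  obtain ⟨c, hc, hdvd⟩ := exists_pos_psum_two_dvd_zonalHarmonic_sub (σ := σ) (K := K) n
  refine ⟨c * n !, by positivity, fun x q hq hharm ↦ ?_⟩
  obtain ⟨p, hp⟩ := hdvd x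
  rw [sub_eq_iff_eq_add.mp hp, map_add, LinearMap.add_apply, fischerForm_psum_two_mul, hharm,
    map_zero, zero_add, ← smul_eq_C_mul, map_smul, LinearMap.smul_apply,
    fischerForm_linearForm_pow x n hq, smul_eq_mul, mul_assoc]

theorem sum_sum_mul_eval_zonalHarmonic_nonneg [LinearOrder K] [IsStrictOrderedRing K]
    [Nontrivial σ] {ι : Type*} (s : Finset ι) (w : ι → K) (v : ι → σ → K) (n : ℕ) :
    0 ≤ ∑ i ∈ s, ∑ j ∈ s, w i * w j * eval (v i) (zonalHarmonic (v j) n) := by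
  obtain ⟨c, hc, hrepr⟩ := exists_pos_fischerForm_zonalHarmonic (σ := σ) (K := K) n
  set p : MvPolynomial σ K := ∑ j ∈ s, w j • zonalHarmonic (v j) n with hp
  have hhom : p.IsHomogeneous n := (homogeneousSubmodule σ K n).sum_mem fun j _ ↦
    Submodule.smul_mem _ (w j) (isHomogeneous_zonalHarmonic (v j) n)
  have hharm : polyLaplacian p = 0 := by
    simp [hp, polyLaplacian_zonalHarmonic]
  have hnorm : fischerForm p p =
      c * ∑ i ∈ s, ∑ j ∈ s, w i * w j * eval (v i) (zonalHarmonic (v j) n) := calc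
    fischerForm p p = ∑ i ∈ s, w i * fischerForm (zonalHarmonic (v i) n) p := by
      conv_lhs => enter [1]; rw [hp]
      simp only [map_sum, map_smul, LinearMap.sum_apply, LinearMap.smul_apply, smul_eq_mul]
    _ = ∑ i ∈ s, w i * (c * eval (v i) p) :=
      Finset.sum_congr rfl fun i _ ↦ by rw [hrepr (v i) p hhom hharm]
    _ = _ := by
      simp only [hp, map_sum, smul_eval, Finset.mul_sum, mul_assoc, mul_left_comm c]
  exact nonneg_of_mul_nonneg_right (hnorm ▸ fischerForm_self_nonneg p) hc

end ZonalHarmonic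

section PositiveDefinite

open Module

variable {E : Type*} [NormedAddCommGroup E] [InnerProductSpace ℝ E]

theorem posSemidef_gegenbauer_inner (hE : 1 < finrank ℝ E) {ι : Type*} (v : ι → E)
    (hv : ∀ i, ‖v i‖ = 1) (n : ℕ) :
    (Matrix.of fun i j ↦ (gegenbauer (finrank ℝ E : ℝ) n).eval ⟪v i, v j⟫).PosSemidef := by
  have : FiniteDimensional ℝ E := .of_finrank_pos (by omega)
  have : Nontrivial (Fin (finrank ℝ E)) := Fin.nontrivial_iff_two_le.mpr hE
  let u (i : ι) : Fin (finrank ℝ E) → ℝ := (stdOrthonormalBasis ℝ E).repr (v i)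
  have hu (i j : ι) : u j ⬝ᵥ u i = ⟪v i, v j⟫ := by
    rw [← (stdOrthonormalBasis ℝ E).repr.inner_map_map, EuclideanSpace.inner_eq_star_dotProduct,
      star_trivial]
  have hunit (i : ι) : u i ⬝ᵥ u i = 1 := by
    rw [hu, real_inner_self_eq_norm_sq, hv, one_pow]
  have hzonal (i j : ι) : (gegenbauer (finrank ℝ E : ℝ) n).eval ⟪v i, v j⟫ =
      MvPolynomial.eval (u i) (zonalHarmonic (u j) n) := by
    rw [eval_zonalHarmonic (hunit j) (hunit i), Fintype.card_fin, hu]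
  refine ⟨Matrix.IsHermitian.ext fun i j ↦ ?_, fun w ↦ ?_⟩
  · simp only [Matrix.of_apply, star_trivial, real_inner_comm]
  · simpa only [Finsupp.sum, Matrix.of_apply, star_trivial, hzonal, mul_right_comm] using
      sum_sum_mul_eval_zonalHarmonic_nonneg w.support w u n

theorem card_mul_le_of_posSemidef_sub_const {ι : Type*} [Fintype ι] [Nonempty ι]
    {A : Matrix ι ι ℝ} {b c : ℝ} (hA : (A - Matrix.of fun _ _ ↦ c).PosSemidef)
    (hdiag : ∀ i, A i i ≤ b) (hoff : ∀ i j, i ≠ j → A i j ≤ 0) : Fintype.card ι * c ≤ b := by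
  classical
  have hrow (i : ι) : ∑ j, A i j ≤ b := by
    rw [← Finset.add_sum_erase _ _ (Finset.mem_univ i)]
    exact add_le_of_le_of_nonpos (hdiag i) <|
      Finset.sum_nonpos fun j hj ↦ hoff i j (Finset.ne_of_mem_erase hj).symm
  have hsum : 0 ≤ ∑ i, (∑ j, A i j - Fintype.card ι * c) := by
    simpa [dotProduct, Matrix.mulVec, Finset.sum_sub_distrib] using hA.dotProduct_mulVec_nonneg 1
  have hle : ∑ i, (∑ j, A i j - Fintype.card ι * c) ≤
      Fintype.card ι * (b - Fintype.card ι * c) :=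
    (Finset.sum_le_card_nsmul _ _ _ fun i _ ↦ sub_le_sub_right (hrow i) _).trans_eq <| by
      rw [Finset.card_univ, nsmul_eq_mul]
  exact sub_nonneg.mp (nonneg_of_mul_nonneg_right (hsum.trans hle) (by positivity))

theorem linear_programming_bound_general (hE : 1 < finrank ℝ E)
    (k : ℕ) (c : ℕ → ℝ) (hc0 : 0 < c 0) (hc : ∀ i, 1 ≤ i → i ≤ k → 0 ≤ c i) (f : ℝ → ℝ)
    (hf : ∀ t, f t =
      ∑ i ∈ Finset.range (k + 1), c i * (gegenbauer (finrank ℝ E : ℝ) i).eval t)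
    (X : Finset E) (hX : ∀ x ∈ X, ‖x‖ = 1)
    (hXf : ∀ x ∈ X, ∀ y ∈ X, x ≠ y → f ⟪x, y⟫ ≤ 0) : (X.card : ℝ) ≤ f 1 / c 0 := by
  rw [le_div_iff₀ hc0]
  obtain rfl | hne := X.eq_empty_or_nonempty
  · have hone (i : ℕ) : (gegenbauer (finrank ℝ E : ℝ) i).eval 1 = 1 :=
      eval_one_gegenbauer (natCast_add_natCast_sub_one_ne_zero hE) i
    have hcnonneg (i : ℕ) (hi : i ≤ k) : 0 ≤ c i :=
      i.eq_zero_or_pos.elim (fun h ↦ h ▸ hc0.le) fun h ↦ hc i h hi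
    rw [Finset.card_empty, Nat.cast_zero, zero_mul, hf]
    refine Finset.sum_nonneg fun i hi ↦ ?_
    rw [hone, mul_one]
    exact hcnonneg i (Finset.mem_range_succ_iff.mp hi)
  · have : Nonempty X := hne.to_subtype
    let A : Matrix X X ℝ := Matrix.of fun x y ↦ f ⟪(x : E), y⟫
    have hA : A - (Matrix.of fun _ _ ↦ c 0) = ∑ i ∈ Finset.range k, c (i + 1) •
        Matrix.of fun x y : X ↦ (gegenbauer (finrank ℝ E : ℝ) (i + 1)).eval ⟪(x : E), y⟫ := by
      ext x y
      simp [A, hf, Finset.sum_range_succ', gegenbauer, Matrix.sum_apply]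
    rw [← Fintype.card_coe X]
    refine card_mul_le_of_posSemidef_sub_const (A := A) (hA ▸ ?_) (fun x ↦ ?_) fun x y hxy ↦ ?_
    · exact Matrix.posSemidef_sum _ fun i hi ↦
        (posSemidef_gegenbauer_inner hE _ (fun x : X ↦ hX x x.2) _).smul
          (hc _ (by omega) (Finset.mem_range.mp hi))
    · simp [A, hX x x.2]
    · exact hXf x x.2 y y.2 (Subtype.coe_ne_coe.mpr hxy)

end PositiveDefinite

/-- The classical linear programming bound for spherical codes: if
`f = f_0 Q_0 + … + f_k Q_k` is a nonnegative combination of the Gegenbauer polynomials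
for dimension `d` with `f_0 > 0`, and `f ≤ 0` on `[-1, s]` for some `s ∈ (-1,1)`, then
every finite set `X` of unit vectors in `ℝ^d` with pairwise inner products at most `s`
satisfies `|X| ≤ f(1)/f_0`. -/
theorem linear_programming_bound (d : ℕ) (hd : 2 ≤ d)
    (Q : ℕ → ℝ → ℝ)
    (hQ0 : ∀ t, Q 0 t = 1)
    (hQ1 : ∀ t, Q 1 t = t)
    (hQ2 : ∀ t, Q 2 t = ((d : ℝ) * t ^ 2 - 1) / ((d : ℝ) - 1))
    (hQrec : ∀ i : ℕ, 2 ≤ i → ∀ t,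
      ((i : ℝ) + (d : ℝ) - 2) * Q (i + 1) t
        = (2 * (i : ℝ) + (d : ℝ) - 2) * t * Q i t - (i : ℝ) * Q (i - 1) t)
    (k : ℕ) (hk : 1 ≤ k)
    (c : ℕ → ℝ) (hc0 : 0 < c 0) (hc : ∀ i, 1 ≤ i → i ≤ k → 0 ≤ c i)
    (f : ℝ → ℝ) (hf : ∀ t, f t = ∑ i ∈ Finset.range (k + 1), c i * Q i t)
    (s : ℝ) (hs : s ∈ Set.Ioo (-1 : ℝ) 1)
    (hfs : ∀ t ∈ Set.Icc (-1 : ℝ) s, f t ≤ 0)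
    (X : Finset (EuclideanSpace ℝ (Fin d)))
    (hX : ∀ x ∈ X, ‖x‖ = 1)
    (hXs : ∀ x ∈ X, ∀ y ∈ X, x ≠ y → ⟪x, y⟫ ≤ s) :
    (X.card : ℝ) ≤ f 1 / c 0 := by
  have hd' : ∀ n : ℕ, (n + d - 1 : ℝ) ≠ 0 := natCast_add_natCast_sub_one_ne_zero hd
  have hfin : Module.finrank ℝ (EuclideanSpace ℝ (Fin d)) = d := finrank_euclideanSpace_fin
  refine linear_programming_bound_general (by rwa [hfin]) k c hc0 hc f (fun t ↦ ?_) X hX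
    fun x hx y hy hxy ↦ hfs _ ⟨?_, hXs x hx y hy hxy⟩
  · simp only [hf, hfin, eq_eval_gegenbauer hd' hQ0 hQ1 hQ2 hQrec]
  · exact neg_one_le_real_inner_of_norm_eq_one (hX x hx) (hX y hy)
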